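/- Let d ≥ 1, C > 0, and let f : ℝ × ℝ^d → ℝ be continuous and satisfy |f(y,z)| ≤ C(1 + |y| + ‖z‖) for all (y,z). If (y_n, z_n) is a sequence in ℝ × ℝ^d converging to (y,z), then the diagonal sequence of inf-convolutions f_n(y_n, z_n) converges to f(y,z) as n → ∞. -/

import Mathlib

open Filter Topology

/-- Inf-convolution: `f_n(y,z) = inf_{(u,v)} { f(u,v) + n(|y-u| + ‖z-v‖) }`. -/
noncomputable def infConv (d : ℕ) (f : ℝ × EuclideanSpace ℝ (Fin d) → ℝ) (n : ℕ)
    (y : ℝ) (z : EuclideanSpace ℝ (Fin d)) : ℝ :=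
  sInf {r : ℝ | ∃ u v, r = f (u, v) + (n : ℝ) * (|y - u| + ‖z - v‖)}

/-!
Any Lipschitz minorant `g` of `f`, with constant `K`, gives
`f u + k * dist x u ≥ g x + (k - K) * dist x u`. As `k → ∞`, the right-hand side becomes arbitrarily
large if `u` stays away from `x`, so only points `u` near the limit compete in the infimum, and
there `f u` is close to the limit value by continuity; taking `u = x` bounds the infimum above by
`f x`. Linear growth provides the minorant `-C * (1 + ‖·‖)`.
-/

open Set
open scoped NNReal

section LipschitzEnvelope

variable {X ι : Type*} [PseudoMetricSpace X] {f g : X → ℝ} {K : ℝ≥0}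

/-- The Pasch–Hausdorff envelope of `f` at level `k ≥ 0`: where finite, it is the largest
`k`-Lipschitz minorant of `f`. It generalizes `infConv` to pseudometric spaces. As an infimum of
real numbers, it takes the junk value `0` where `u ↦ f u + k * dist x u` is unbounded below. -/
noncomputable def lipschitzEnvelope (f : X → ℝ) (k : ℝ) (x : X) : ℝ :=
  ⨅ u, f u + k * dist x u

theorem add_sub_mul_dist_le_add_mul_dist (hg : LipschitzWith K g) (hgf : ∀ u, g u ≤ f u)
    (k : ℝ) (x u : X) : g x + (k - K) * dist x u ≤ f u + k * dist x u := by
  linarith [hg.le_add_mul x u, hgf u]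

theorem bddBelow_range_add_mul_dist (hg : LipschitzWith K g) (hgf : ∀ u, g u ≤ f u)
    {k : ℝ} (hk : K ≤ k) (x : X) : BddBelow (range fun u => f u + k * dist x u) := by
  refine ⟨g x, forall_mem_range.2 fun u => ?_⟩
  have hnonneg : 0 ≤ (k - K) * dist x u := mul_nonneg (sub_nonneg.2 hk) dist_nonneg
  linarith [add_sub_mul_dist_le_add_mul_dist hg hgf k x u]

theorem lipschitzEnvelope_le (hg : LipschitzWith K g) (hgf : ∀ u, g u ≤ f u)
    {k : ℝ} (hk : K ≤ k) (x : X) : lipschitzEnvelope f k x ≤ f x := by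
  simpa [lipschitzEnvelope] using ciInf_le (bddBelow_range_add_mul_dist hg hgf hk x) x

variable {l : Filter ι} {k : ι → ℝ} {p : ι → X} {x : X}

theorem eventually_forall_le_add_mul_dist_of_le_dist (hg : LipschitzWith K g)
    (hgf : ∀ u, g u ≤ f u) (hk : Tendsto k l atTop) (hp : Tendsto p l (𝓝 x)) (a : ℝ)
    {r : ℝ} (hr : 0 < r) :
    ∀ᶠ i in l, ∀ u, r ≤ dist (p i) u → a ≤ f u + k i * dist (p i) u := by
  have hgp : Tendsto (fun i => g (p i)) l (𝓝 (g x)) := (hg.continuous.tendsto x).comp hp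
  have hlarge : Tendsto (fun i => g (p i) + (k i - K) * r) l atTop :=
    hgp.add_atTop ((tendsto_atTop_add_const_right l _ hk).atTop_mul_const hr)
  filter_upwards [hlarge.eventually_ge_atTop a, hk.eventually_ge_atTop (K : ℝ)]
    with i hai hki u hu
  calc a ≤ g (p i) + (k i - K) * r := hai
    _ ≤ g (p i) + (k i - K) * dist (p i) u := by gcongr
    _ ≤ f u + k i * dist (p i) u := add_sub_mul_dist_le_add_mul_dist hg hgf _ _ _

theorem eventually_le_lipschitzEnvelope (hf : LowerSemicontinuousAt f x)
    (hg : LipschitzWith K g) (hgf : ∀ u, g u ≤ f u) (hk : Tendsto k l atTop)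
    (hp : Tendsto p l (𝓝 x)) {a : ℝ} (ha : a < f x) :
    ∀ᶠ i in l, a ≤ lipschitzEnvelope f (k i) (p i) := by
  obtain ⟨δ, hδ, hnear⟩ := Metric.eventually_nhds_iff.1 (hf a ha)
  have : Nonempty X := ⟨x⟩
  filter_upwards [hk.eventually_ge_atTop 0, hp.eventually (Metric.ball_mem_nhds x (half_pos hδ)),
    eventually_forall_le_add_mul_dist_of_le_dist hg hgf hk hp a (half_pos hδ)]
    with i hki hpi hfar
  refine le_ciInf fun u => ?_
  rcases le_or_gt (δ / 2) (dist (p i) u) with hu | hu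
  · exact hfar u hu
  · have hux : dist u x < δ := by
      linarith [dist_triangle_left u x (p i), Metric.mem_ball.1 hpi]
    exact (hnear hux).le.trans (le_add_of_nonneg_right (mul_nonneg hki dist_nonneg))

theorem stmt4_general (hf : ContinuousAt f x) (hg : LipschitzWith K g) (hgf : ∀ u, g u ≤ f u)
    (hk : Tendsto k l atTop) (hp : Tendsto p l (𝓝 x)) :
    Tendsto (fun i => lipschitzEnvelope f (k i) (p i)) l (𝓝 (f x)) := by
  refine tendsto_order.2 ⟨fun a ha => ?_, fun b hb => ?_⟩
  · obtain ⟨a', haa', ha'⟩ := exists_between ha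
    filter_upwards [eventually_le_lipschitzEnvelope hf.lowerSemicontinuousAt hg hgf hk hp ha']
      with i hi using haa'.trans_le hi
  · filter_upwards [hk.eventually_ge_atTop (K : ℝ), (hf.tendsto.comp hp).eventually_lt_const hb]
      with i hki hfi using (lipschitzEnvelope_le hg hgf hki (p i)).trans_lt hfi

end LipschitzEnvelope

theorem lipschitzWith_neg_mul_one_add_norm {E : Type*} [SeminormedAddCommGroup E] (C : ℝ≥0) :
    LipschitzWith C fun x : E => -((C : ℝ) * (1 + ‖x‖)) := by
  refine LipschitzWith.of_le_add_mul C fun x y => ?_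
  have hxy : (C : ℝ) * ‖y‖ ≤ C * (‖x‖ + dist x y) := by
    gcongr
    rw [dist_comm, dist_eq_norm]
    exact norm_le_norm_add_norm_sub' y x
  linarith

theorem neg_mul_one_add_norm_le_ofLp {E F : Type*} [SeminormedAddCommGroup E]
    [SeminormedAddCommGroup F] {f : E × F → ℝ} {C : ℝ}
    (hf : ∀ u v, -(C * (1 + ‖u‖ + ‖v‖)) ≤ f (u, v)) (p : WithLp 1 (E × F)) :
    -(C * (1 + ‖p‖)) ≤ f p.ofLp := by
  rw [WithLp.prod_norm_eq_of_L1, ← add_assoc]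
  exact hf p.fst p.snd

-- The cost `|y - u| + ‖z - v‖` is the distance of the `L¹` product, not of the sup product.
theorem infConv_eq_lipschitzEnvelope (d : ℕ) (f : ℝ × EuclideanSpace ℝ (Fin d) → ℝ) (n : ℕ)
    (y : ℝ) (z : EuclideanSpace ℝ (Fin d)) :
    infConv d f n y z = lipschitzEnvelope
      (fun p : WithLp 1 (ℝ × EuclideanSpace ℝ (Fin d)) => f p.ofLp) n (.toLp 1 (y, z)) := by
  have hdist (u : ℝ) (v : EuclideanSpace ℝ (Fin d)) :
      dist (WithLp.toLp 1 (y, z)) (WithLp.toLp 1 (u, v)) = |y - u| + ‖z - v‖ := by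
    rw [WithLp.prod_dist_eq_of_L1, Real.dist_eq, dist_eq_norm]
    rfl
  refine congrArg sInf (Set.ext fun r => ?_)
  simp only [mem_ofPred_eq, mem_range, (WithLp.toLp_surjective 1).exists, Prod.exists, hdist,
    eq_comm (a := r)]

theorem stmt4 (d : ℕ) (hd : 1 ≤ d) (C : ℝ) (hC : 0 < C)
    (f : ℝ × EuclideanSpace ℝ (Fin d) → ℝ) (hf : Continuous f)
    (hgrowth : ∀ (y : ℝ) (z : EuclideanSpace ℝ (Fin d)), |f (y, z)| ≤ C * (1 + |y| + ‖z‖))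
    (yseq : ℕ → ℝ) (zseq : ℕ → EuclideanSpace ℝ (Fin d))
    (y : ℝ) (z : EuclideanSpace ℝ (Fin d))
    (hconv : Tendsto (fun n => (yseq n, zseq n)) atTop (𝓝 (y, z))) :
    Tendsto (fun n => infConv d f n (yseq n) (zseq n)) atTop (𝓝 (f (y, z))) := by
  simp only [infConv_eq_lipschitzEnvelope]
  exact stmt4_general (hf.comp (WithLp.prod_continuous_ofLp 1 _ _)).continuousAt
    (lipschitzWith_neg_mul_one_add_norm ⟨C, hC.le⟩)
    (neg_mul_one_add_norm_le_ofLp fun u v => (abs_le.1 (hgrowth u v)).1) tendsto_natCast_atTop_atTop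
    (((WithLp.prod_continuous_toLp 1 _ _).tendsto _).comp hconv)
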